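/- Let f, g : [a;b] → ℝ be regulated functions, let [c;d] ⊆ [a;b], let c = t_0 < t_1 < ... < t_n = d be a partition of [c;d], let ξ_0 = c and let ξ_1, ..., ξ_n satisfy t_{i−1} ≤ ξ_i ≤ t_i for i = 1, ..., n. Set δ_{−1} := sup_{c≤t≤d} |f(t) − f(c)|, and let δ_0 ≥ δ_1 ≥ ... ≥ δ_r ≥ 0 and ε_0 ≥ ε_1 ≥ ... ≥ ε_r ≥ 0 be finite nonincreasing sequences of non-negative reals. Then |Σ_{i=1}^n f(ξ_i)(g(t_i) − g(t_{i−1})) − f(c)·(g(d) − g(c))| ≤ Σ_{k=0}^r 2^k · δ_{k−1} · TV^{ε_k}(g,[c;d]) + Σ_{k=0}^r 2^k · ε_k · TV^{δ_k}(f,[c;d]) + n·δ_r·ε_r. -/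

import Mathlib

open Filter Set

/-- Truncated variation of `f` on `[a;b]` with truncation parameter `δ`. -/
noncomputable def truncVar (f : ℝ → ℝ) (δ a b : ℝ) : ENNReal :=
  ⨆ (n : ℕ) (t : Fin (n + 1) → ℝ) (_ : StrictMono t)
    (_ : ∀ i, t i ∈ Set.Icc a b),
    ∑ i : Fin n, ENNReal.ofReal (|f (t i.succ) - f (t i.castSucc)| - δ)

/-- p-variation of `f` on `[a;b]`. -/
noncomputable def pVar (f : ℝ → ℝ) (p a b : ℝ) : ENNReal :=
  ⨆ (n : ℕ) (t : Fin (n + 1) → ℝ) (_ : StrictMono t)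
    (_ : ∀ i, t i ∈ Set.Icc a b),
    ∑ i : Fin n, ENNReal.ofReal (|f (t i.succ) - f (t i.castSucc)| ^ p)

/-- The p-variation norm `(V^p(f,[a;b]))^{1/p}`. -/
noncomputable def pVarNorm (f : ℝ → ℝ) (p a b : ℝ) : ℝ :=
  (pVar f p a b).toReal ^ (1 / p)

/-- Oscillation norm `sup_{a ≤ s < t ≤ b} |f t - f s|`. -/
noncomputable def oscNorm (f : ℝ → ℝ) (a b : ℝ) : ℝ :=
  sSup {x | ∃ s ∈ Set.Icc a b, ∃ t ∈ Set.Icc a b, s < t ∧ x = |f t - f s|}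

/-- Sup norm `sup_{a ≤ t ≤ b} |f t|`. -/
noncomputable def supNorm (f : ℝ → ℝ) (a b : ℝ) : ℝ :=
  sSup {x | ∃ t ∈ Set.Icc a b, x = |f t|}

/-- `I` is the Riemann–Stieltjes integral `∫_a^b f dg`. -/
def RSIntegral (f g : ℝ → ℝ) (a b : ℝ) (I : ℝ) : Prop :=
  ∀ ε > (0 : ℝ), ∃ δ > (0 : ℝ), ∀ (n : ℕ) (t : Fin (n + 1) → ℝ) (ξ : Fin n → ℝ),
    StrictMono t → t 0 = a → t (Fin.last n) = b →
    (∀ i : Fin n, t i.castSucc ≤ ξ i ∧ ξ i ≤ t i.succ) →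
    (∀ i : Fin n, t i.succ - t i.castSucc < δ) →
    |∑ i : Fin n, f (ξ i) * (g (t i.succ) - g (t i.castSucc)) - I| < ε

/-- `f` is regulated on `[a;b]`: all the relevant one-sided limits exist and are finite. -/
def Regulated (f : ℝ → ℝ) (a b : ℝ) : Prop :=
  (∃ L : ℝ, Tendsto f (nhdsWithin a (Set.Ioi a)) (nhds L)) ∧
  (∃ L : ℝ, Tendsto f (nhdsWithin b (Set.Iio b)) (nhds L)) ∧
  ∀ x ∈ Set.Ioo a b,
    (∃ L : ℝ, Tendsto f (nhdsWithin x (Set.Iio x)) (nhds L)) ∧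
    (∃ L : ℝ, Tendsto f (nhdsWithin x (Set.Ioi x)) (nhds L))

/-- `f` and `g` have no common points of discontinuity on `[a;b]`. -/
def NoCommonDiscont (f g : ℝ → ℝ) (a b : ℝ) : Prop :=
  ∀ x ∈ Set.Icc a b,
    ContinuousWithinAt f (Set.Icc a b) x ∨ ContinuousWithinAt g (Set.Icc a b) x

/-!
Put `S(x, y) = ∑ (x (i + 1) - x 0) * (y (i + 1) - y i)` for the sampled sequences `x` of `f` and
`y` of `g`. If `x` stays within `C` of `x 0`, then `|S(x, y)|` is at most `C` times the variation of
`y`, and, after summation by parts, at most the oscillation of `y` times the variation of `x`.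

A sequence `x` has a skeleton `u` within `δ` of it whose variation is at most the truncated
variation of `x` at level `δ`: with `V` the running truncated variation, take the largest minorant
of `x` that is 1-Lipschitz for `|V i - V j|`. It is close to `x` because truncated variation is
superadditive, whence `|x i - x j| ≤ δ + |V i - V j|`. With skeletons `u` of `x` at level `δ 0` and
`v` of `y` at level `ε 0`,
`S(x, y) = S(x, v) + S(u, y - v) + S(x - u, y - v)`,
and the first two terms are the `k = 0` contributions to the estimate. The procedure is repeated on
`(x - u, y - v)` at the next levels. Subtracting a skeleton at most doubles the truncated variation
at finer levels, which gives the factors `2 ^ k`; after the last step both sequences oscillate by at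
most `δ r` and `ε r`, so each of the `n` terms left is at most `δ r * ε r`.
-/

section LipschitzEnvelope

variable {ι E : Type*} [PseudoMetricSpace E] {w : ι → E} {x : ι → ℝ} {δ : ℝ}

/-- The Pasch–Hausdorff (McShane) envelope of `x` with respect to `w`: the largest minorant of `x`
that is 1-Lipschitz for the pseudometric `dist (w i) (w j)`. The infimum is meaningful only if
`x` has such a minorant. -/
noncomputable def lipEnvelope (w : ι → E) (x : ι → ℝ) (i : ι) : ℝ :=
  ⨅ j, (x j + dist (w i) (w j))

theorem bddBelow_range_lipEnvelope (h : ∀ i j, x i - x j ≤ δ + dist (w i) (w j)) (i : ι) :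
    BddBelow (range fun j ↦ x j + dist (w i) (w j)) :=
  ⟨x i - δ, forall_mem_range.2 fun j ↦ by linarith [h i j]⟩

theorem lipEnvelope_le (h : ∀ i j, x i - x j ≤ δ + dist (w i) (w j)) (i : ι) :
    lipEnvelope w x i ≤ x i :=
  (ciInf_le (bddBelow_range_lipEnvelope h i) i).trans_eq (by simp)

theorem le_lipEnvelope_add (h : ∀ i j, x i - x j ≤ δ + dist (w i) (w j)) (i : ι) :
    x i ≤ lipEnvelope w x i + δ := by
  have : Nonempty ι := ⟨i⟩
  exact sub_le_iff_le_add.1 (le_ciInf fun j ↦ by linarith [h i j])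

theorem lipEnvelope_le_add_dist (h : ∀ i j, x i - x j ≤ δ + dist (w i) (w j)) (i j : ι) :
    lipEnvelope w x i ≤ lipEnvelope w x j + dist (w i) (w j) := by
  have : Nonempty ι := ⟨i⟩
  refine sub_le_iff_le_add.1 (le_ciInf fun k ↦ sub_le_iff_le_add.2 ?_)
  calc lipEnvelope w x i ≤ x k + dist (w i) (w k) := ciInf_le (bddBelow_range_lipEnvelope h i) k
    _ ≤ x k + dist (w j) (w k) + dist (w i) (w j) := by
      linarith [dist_triangle (w i) (w j) (w k)]

theorem abs_lipEnvelope_sub_le (h : ∀ i j, x i - x j ≤ δ + dist (w i) (w j)) (i j : ι) :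
    |lipEnvelope w x i - lipEnvelope w x j| ≤ dist (w i) (w j) :=
  abs_sub_le_iff.2 ⟨by linarith [lipEnvelope_le_add_dist h i j],
    by linarith [lipEnvelope_le_add_dist h j i, dist_comm (w i) (w j)]⟩

end LipschitzEnvelope

section SeqTruncVar

variable {x : ℕ → ℝ} {δ : ℝ} {i j : ℕ}

/-- Truncated variation of the finite sequence `x 0, …, x n`, computed by choosing the last jump:
it is the supremum over increasing index chains of `∑ max (|x jₘ₊₁ - x jₘ| - δ) 0`. Its value
at `n = 0` is the supremum of an empty family of reals, that is `0`. Unlike `truncVar`, it is always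
finite, so its increments can serve as distances. -/
noncomputable def seqTruncVar (x : ℕ → ℝ) (δ : ℝ) (n : ℕ) : ℝ :=
  ⨆ i : Fin n, (seqTruncVar x δ i + max (|x n - x i| - δ) 0)

theorem seqTruncVar_zero (x : ℕ → ℝ) (δ : ℝ) : seqTruncVar x δ 0 = 0 := by
  rw [seqTruncVar, Real.iSup_of_isEmpty]

theorem seqTruncVar_add_le (x : ℕ → ℝ) (δ : ℝ) (hij : i < j) :
    seqTruncVar x δ i + max (|x j - x i| - δ) 0 ≤ seqTruncVar x δ j := by
  rw [seqTruncVar.eq_1 x δ j]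
  exact le_ciSup (f := fun i : Fin j ↦ seqTruncVar x δ i + max (|x j - x i| - δ) 0)
    (finite_range _).bddAbove ⟨i, hij⟩

theorem seqTruncVar_mono (x : ℕ → ℝ) (δ : ℝ) : Monotone (seqTruncVar x δ) :=
  monotone_nat_of_le_succ fun n ↦
    (le_add_of_nonneg_right (le_max_right _ _)).trans (seqTruncVar_add_le x δ n.lt_succ_self)

theorem seqTruncVar_nonneg (x : ℕ → ℝ) (δ : ℝ) (n : ℕ) : 0 ≤ seqTruncVar x δ n :=
  (seqTruncVar_zero x δ).ge.trans (seqTruncVar_mono x δ n.zero_le)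

theorem seqTruncVar_le {v : ℕ → ℝ} (h₀ : 0 ≤ v 0)
    (hv : ∀ i j, i < j → v i + max (|x j - x i| - δ) 0 ≤ v j) (n : ℕ) :
    seqTruncVar x δ n ≤ v n := by
  induction n using Nat.strong_induction_on with
  | _ n ih =>
    rcases n.eq_zero_or_pos with rfl | hn
    · rwa [seqTruncVar_zero]
    · have : Nonempty (Fin n) := ⟨⟨0, hn⟩⟩
      rw [seqTruncVar]
      exact ciSup_le fun i ↦ (add_le_add_left (ih i i.2) _).trans (hv i n i.2)

theorem seqTruncVar_anti (x : ℕ → ℝ) (n : ℕ) : Antitone fun δ ↦ seqTruncVar x δ n :=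
  fun δ _ hδ ↦ seqTruncVar_le (seqTruncVar_nonneg x δ 0)
    (fun _ _ hij ↦ le_trans (by gcongr) (seqTruncVar_add_le x δ hij)) n

theorem seqTruncVar_sub_le {u w : ℕ → ℝ} (hw₀ : 0 ≤ w 0)
    (hw : ∀ i j, i ≤ j → |u j - u i| ≤ w j - w i) (n : ℕ) :
    seqTruncVar (x - u) δ n ≤ seqTruncVar x δ n + w n := by
  refine seqTruncVar_le (v := fun n ↦ seqTruncVar x δ n + w n)
    (add_nonneg (seqTruncVar_nonneg x δ 0) hw₀) (fun i j hij ↦ ?_) n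
  have hx := seqTruncVar_add_le x δ hij
  have hu := hw i j hij.le
  have hsub : |(x - u) j - (x - u) i| ≤ |x j - x i| + |u j - u i| := by
    rw [Pi.sub_apply, Pi.sub_apply, sub_sub_sub_comm]
    exact abs_sub _ _
  have hmax : max (|(x - u) j - (x - u) i| - δ) 0 ≤ max (|x j - x i| - δ) 0 + (w j - w i) :=
    max_le (by linarith [le_max_left (|x j - x i| - δ) 0])
      (add_nonneg (le_max_right _ _) ((abs_nonneg _).trans hu))
  linarith

theorem sub_le_add_dist_seqTruncVar (hδ : 0 ≤ δ) (i j : ℕ) :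
    x i - x j ≤ δ + dist (seqTruncVar x δ i) (seqTruncVar x δ j) := by
  rw [Real.dist_eq]
  rcases lt_trichotomy i j with hij | rfl | hij
  · linarith [seqTruncVar_add_le x δ hij, le_max_left (|x j - x i| - δ) 0,
      neg_le_abs (x j - x i), neg_le_abs (seqTruncVar x δ i - seqTruncVar x δ j)]
  · simpa using hδ
  · linarith [seqTruncVar_add_le x δ hij, le_max_left (|x i - x j| - δ) 0,
      le_abs_self (x i - x j), le_abs_self (seqTruncVar x δ i - seqTruncVar x δ j)]

end SeqTruncVar

section Skeleton

variable {x : ℕ → ℝ} {δ : ℝ} {i j : ℕ}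

/-- A sequence within `δ` of `x` whose variation is at most the `δ`-truncated variation of `x`. -/
noncomputable def truncSkeleton (x : ℕ → ℝ) (δ : ℝ) : ℕ → ℝ :=
  lipEnvelope (seqTruncVar x δ) x

theorem abs_sub_truncSkeleton_sub_le (hδ : 0 ≤ δ) (i j : ℕ) :
    |(x - truncSkeleton x δ) i - (x - truncSkeleton x δ) j| ≤ δ := by
  have hle := lipEnvelope_le (sub_le_add_dist_seqTruncVar (x := x) hδ)
  have hge := le_lipEnvelope_add (sub_le_add_dist_seqTruncVar (x := x) hδ)
  simp only [Pi.sub_apply, truncSkeleton]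
  exact abs_sub_le_iff.2 ⟨by linarith [hle j, hge i], by linarith [hle i, hge j]⟩

theorem abs_truncSkeleton_sub_le (hδ : 0 ≤ δ) (hij : i ≤ j) :
    |truncSkeleton x δ j - truncSkeleton x δ i| ≤ seqTruncVar x δ j - seqTruncVar x δ i := by
  rw [← abs_of_nonneg (sub_nonneg.2 (seqTruncVar_mono x δ hij)), ← Real.dist_eq]
  exact abs_lipEnvelope_sub_le (sub_le_add_dist_seqTruncVar hδ) j i

theorem sum_abs_truncSkeleton_le (hδ : 0 ≤ δ) (n : ℕ) :
    ∑ i ∈ Finset.range n, |truncSkeleton x δ (i + 1) - truncSkeleton x δ i| ≤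
      seqTruncVar x δ n := by
  calc ∑ i ∈ Finset.range n, |truncSkeleton x δ (i + 1) - truncSkeleton x δ i|
      ≤ ∑ i ∈ Finset.range n, (seqTruncVar x δ (i + 1) - seqTruncVar x δ i) :=
        Finset.sum_le_sum fun i _ ↦ abs_truncSkeleton_sub_le hδ i.le_succ
    _ = seqTruncVar x δ n := by rw [Finset.sum_range_sub, seqTruncVar_zero, sub_zero]

end Skeleton

section TruncResidual

variable {x δ : ℕ → ℝ} {k : ℕ}

/-- The remainder of `x` after successively subtracting the skeletons at the truncation levels
`δ 0, …, δ (k - 1)`. -/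
noncomputable def truncResidual (x δ : ℕ → ℝ) : ℕ → ℕ → ℝ
  | 0 => x
  | k + 1 => truncResidual x δ k - truncSkeleton (truncResidual x δ k) (δ k)

theorem seqTruncVar_truncResidual_le {η : ℝ} (hη : 0 ≤ η) (hδ : ∀ j < k, η ≤ δ j) (n : ℕ) :
    seqTruncVar (truncResidual x δ k) η n ≤ 2 ^ k * seqTruncVar x η n := by
  induction k with
  | zero => simp [truncResidual]
  | succ k ih =>
    have hk : η ≤ δ k := hδ k k.lt_succ_self
    calc seqTruncVar (truncResidual x δ (k + 1)) η n
        ≤ seqTruncVar (truncResidual x δ k) η n + seqTruncVar (truncResidual x δ k) (δ k) n :=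
          seqTruncVar_sub_le (seqTruncVar_nonneg _ _ 0)
            (fun _ _ hij ↦ abs_truncSkeleton_sub_le (hη.trans hk) hij) n
      _ ≤ 2 * seqTruncVar (truncResidual x δ k) η n := by
          linarith [seqTruncVar_anti (truncResidual x δ k) n hk]
      _ ≤ 2 ^ (k + 1) * seqTruncVar x η n := by
          rw [pow_succ', mul_assoc]
          gcongr
          exact ih fun j hj ↦ hδ j (hj.trans k.lt_succ_self)

theorem sum_abs_truncSkeleton_truncResidual_le (hk : 0 ≤ δ k) (hδ : ∀ j < k, δ k ≤ δ j) (n : ℕ) :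
    ∑ i ∈ Finset.range n, |truncSkeleton (truncResidual x δ k) (δ k) (i + 1) -
      truncSkeleton (truncResidual x δ k) (δ k) i| ≤ 2 ^ k * seqTruncVar x (δ k) n :=
  (sum_abs_truncSkeleton_le hk n).trans (seqTruncVar_truncResidual_le hk hδ n)

end TruncResidual

theorem abs_sum_mul_le {ι : Type*} {s : Finset ι} {a b : ι → ℝ} {C : ℝ}
    (ha : ∀ i ∈ s, |a i| ≤ C) :
    |∑ i ∈ s, a i * b i| ≤ C * ∑ i ∈ s, |b i| := by
  rw [Finset.mul_sum]
  refine (Finset.abs_sum_le_sum_abs _ _).trans (Finset.sum_le_sum fun i hi ↦ ?_)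
  rw [abs_mul]
  exact mul_le_mul_of_nonneg_right (ha i hi) (abs_nonneg _)

section CentredSum

variable {R : Type*} [CommRing R]

/-- The Riemann–Stieltjes sum of the centred sequence `x - x 0` against `y`, with the integrand
evaluated at the right end of each step. -/
def centredSum (x y : ℕ → R) (n : ℕ) : R :=
  ∑ i ∈ Finset.range n, (x (i + 1) - x 0) * (y (i + 1) - y i)

theorem centredSum_eq_sum_by_parts (x y : ℕ → R) (n : ℕ) :
    centredSum x y n = ∑ i ∈ Finset.range n, (y n - y i) * (x (i + 1) - x i) := by
  induction n with
  | zero => simp [centredSum]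
  | succ n ih =>
    have hshift : ∑ i ∈ Finset.range n, (y (n + 1) - y i) * (x (i + 1) - x i) =
        centredSum x y n + (x n - x 0) * (y (n + 1) - y n) := by
      rw [ih, ← Finset.sum_range_sub, Finset.sum_mul, ← Finset.sum_add_distrib]
      exact Finset.sum_congr rfl fun _ _ ↦ by ring
    rw [Finset.sum_range_succ, hshift, centredSum, centredSum, Finset.sum_range_succ]
    ring

theorem centredSum_eq_add_centredSum_sub_sub (x y u v : ℕ → R) (n : ℕ) :
    centredSum x y n =
      centredSum x v n + centredSum u (y - v) n + centredSum (x - u) (y - v) n := by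
  simp only [centredSum, ← Finset.sum_add_distrib, Pi.sub_apply]
  exact Finset.sum_congr rfl fun _ _ ↦ by ring

variable {x y : ℕ → ℝ} {n : ℕ} {C : ℝ}

theorem abs_centredSum_le_mul_sum_right (hx : ∀ i ≤ n, |x i - x 0| ≤ C) :
    |centredSum x y n| ≤ C * ∑ i ∈ Finset.range n, |y (i + 1) - y i| :=
  abs_sum_mul_le fun _ hi ↦ hx _ (Finset.mem_range.1 hi)

theorem abs_centredSum_le_mul_sum_left (hy : ∀ i ≤ n, |y n - y i| ≤ C) :
    |centredSum x y n| ≤ C * ∑ i ∈ Finset.range n, |x (i + 1) - x i| := by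
  rw [centredSum_eq_sum_by_parts]
  exact abs_sum_mul_le fun _ hi ↦ hy _ (Finset.mem_range.1 hi).le

theorem abs_centredSum_le_nat_mul {δ ε : ℝ} (hx : ∀ i j, |x i - x j| ≤ δ)
    (hy : ∀ i j, |y i - y j| ≤ ε) : |centredSum x y n| ≤ n * δ * ε := by
  have hδ : 0 ≤ δ := (abs_nonneg _).trans (hx 0 0)
  have hsum : ∑ i ∈ Finset.range n, |y (i + 1) - y i| ≤ n * ε := by
    simpa using Finset.sum_le_card_nsmul (Finset.range n) _ ε fun i _ ↦ hy (i + 1) i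
  calc |centredSum x y n| ≤ δ * ∑ i ∈ Finset.range n, |y (i + 1) - y i| :=
        abs_centredSum_le_mul_sum_right fun i _ ↦ hx i 0
    _ ≤ δ * (n * ε) := by gcongr
    _ = n * δ * ε := by ring

theorem abs_centredSum_truncResidual_le {δ ε : ℕ → ℝ} {k : ℕ}
    (hδk : 0 ≤ δ k) (hεk : 0 ≤ ε k) (hδ : ∀ j < k, δ k ≤ δ j) (hε : ∀ j < k, ε k ≤ ε j)
    (hx : ∀ i ≤ n, |truncResidual x δ k i - truncResidual x δ k 0| ≤ C) :
    |centredSum (truncResidual x δ k) (truncResidual y ε k) n| ≤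
      2 ^ k * C * seqTruncVar y (ε k) n + 2 ^ k * ε k * seqTruncVar x (δ k) n +
        |centredSum (truncResidual x δ (k + 1)) (truncResidual y ε (k + 1)) n| := by
  have hC : 0 ≤ C := (abs_nonneg _).trans (hx 0 n.zero_le)
  set u := truncSkeleton (truncResidual x δ k) (δ k)
  set v := truncSkeleton (truncResidual y ε k) (ε k)
  have hv : |centredSum (truncResidual x δ k) v n| ≤ C * (2 ^ k * seqTruncVar y (ε k) n) :=
    (abs_centredSum_le_mul_sum_right hx).trans <|
      mul_le_mul_of_nonneg_left (sum_abs_truncSkeleton_truncResidual_le hεk hε n) hC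
  have hu : |centredSum u (truncResidual y ε k - v) n| ≤ ε k * (2 ^ k * seqTruncVar x (δ k) n) :=
    (abs_centredSum_le_mul_sum_left fun i _ ↦ abs_sub_truncSkeleton_sub_le hεk n i).trans <|
      mul_le_mul_of_nonneg_left (sum_abs_truncSkeleton_truncResidual_le hδk hδ n) hεk
  calc |centredSum (truncResidual x δ k) (truncResidual y ε k) n|
      ≤ |centredSum (truncResidual x δ k) v n| + |centredSum u (truncResidual y ε k - v) n| +
          |centredSum (truncResidual x δ k - u) (truncResidual y ε k - v) n| := by
        rw [centredSum_eq_add_centredSum_sub_sub _ _ u v]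
        exact abs_add_three _ _ _
    _ ≤ C * (2 ^ k * seqTruncVar y (ε k) n) + ε k * (2 ^ k * seqTruncVar x (δ k) n) +
          |centredSum (truncResidual x δ k - u) (truncResidual y ε k - v) n| := by gcongr
    _ = _ := by
        rw [truncResidual, truncResidual]
        ring

theorem abs_centredSum_le_sum_seqTruncVar {δ ε : ℕ → ℝ} {r : ℕ}
    (hδ₀ : ∀ k ≤ r, 0 ≤ δ k) (hε₀ : ∀ k ≤ r, 0 ≤ ε k)
    (hδ : AntitoneOn δ (Iic r)) (hε : AntitoneOn ε (Iic r)) (hx : ∀ i ≤ n, |x i - x 0| ≤ C) :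
    |centredSum x y n| ≤
      ∑ k ∈ Finset.range (r + 1),
          2 ^ k * (if k = 0 then C else δ (k - 1)) * seqTruncVar y (ε k) n +
        ∑ k ∈ Finset.range (r + 1), 2 ^ k * ε k * seqTruncVar x (δ k) n + n * δ r * ε r := by
  have hstep : ∀ k ∈ Finset.range (r + 1),
      |centredSum (truncResidual x δ k) (truncResidual y ε k) n| -
          |centredSum (truncResidual x δ (k + 1)) (truncResidual y ε (k + 1)) n| ≤
        2 ^ k * (if k = 0 then C else δ (k - 1)) * seqTruncVar y (ε k) n +
          2 ^ k * ε k * seqTruncVar x (δ k) n := by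
    intro k hk
    have hkr : k ≤ r := Finset.mem_range_succ_iff.1 hk
    have hδk : ∀ j < k, δ k ≤ δ j := fun j hj ↦ hδ (hj.le.trans hkr) hkr hj.le
    have hεk : ∀ j < k, ε k ≤ ε j := fun j hj ↦ hε (hj.le.trans hkr) hkr hj.le
    refine sub_le_iff_le_add.2
      (abs_centredSum_truncResidual_le (hδ₀ k hkr) (hε₀ k hkr) hδk hεk ?_)
    cases k with
    | zero => simpa [truncResidual] using hx
    | succ k => exact fun i _ ↦ abs_sub_truncSkeleton_sub_le (hδ₀ k (by lia)) i 0
  have hlast : |centredSum (truncResidual x δ (r + 1)) (truncResidual y ε (r + 1)) n| ≤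
      n * δ r * ε r :=
    abs_centredSum_le_nat_mul (abs_sub_truncSkeleton_sub_le (hδ₀ r le_rfl))
      (abs_sub_truncSkeleton_sub_le (hε₀ r le_rfl))
  have htelescope := Finset.sum_le_sum hstep
  rw [Finset.sum_range_sub', Finset.sum_add_distrib] at htelescope
  simp only [truncResidual] at htelescope hlast
  linarith

end CentredSum

section TruncVar

theorem strictMono_snoc {α : Type*} [Preorder α] {n : ℕ} {τ : Fin (n + 1) → α} {a : α}
    (hτ : StrictMono τ) (ha : τ (Fin.last n) < a) :
    StrictMono (Fin.snoc τ a : Fin (n + 2) → α) := by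
  refine Fin.strictMono_iff_lt_succ.2 (Fin.lastCases ?_ fun i ↦ ?_)
  · simpa [Fin.succ_last] using ha
  · simpa [← Fin.castSucc_succ] using hτ Fin.castSucc_lt_succ

variable {f : ℝ → ℝ} {s : ℕ → ℝ} {δ c d : ℝ}

theorem exists_chain_seqTruncVar_le (hδ : 0 ≤ δ) (hs : Monotone s) (hmem : ∀ i, s i ∈ Icc c d)
    (n : ℕ) :
    ∃ (m : ℕ) (τ : Fin (m + 1) → ℝ), StrictMono τ ∧ (∀ i, τ i ∈ Icc c d) ∧
      τ (Fin.last m) = s n ∧ ENNReal.ofReal (seqTruncVar (f ∘ s) δ n) ≤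
        ∑ i : Fin m, ENNReal.ofReal (|f (τ i.succ) - f (τ i.castSucc)| - δ) := by
  induction n using Nat.strong_induction_on with
  | _ n ih =>
    rcases n.eq_zero_or_pos with rfl | hn
    · exact ⟨0, fun _ ↦ s 0, Subsingleton.strictMono (α := Fin 1) _, fun _ ↦ hmem 0, rfl,
        by simp [seqTruncVar_zero]⟩
    have : Nonempty (Fin n) := ⟨⟨0, hn⟩⟩
    obtain ⟨i, hi⟩ := exists_eq_ciSup_of_finite
      (f := fun i : Fin n ↦ seqTruncVar (f ∘ s) δ i + max (|(f ∘ s) n - (f ∘ s) i| - δ) 0)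
    rw [seqTruncVar, ← hi]
    obtain ⟨m, τ, hτ, hτmem, hlast, hle⟩ := ih i i.2
    rcases (hs i.2.le).eq_or_lt with heq | hlt
    · exact ⟨m, τ, hτ, hτmem, hlast.trans heq, by simpa [heq, hδ] using hle⟩
    · refine ⟨m + 1, Fin.snoc τ (s n), strictMono_snoc hτ (hlast.trans_lt hlt),
        Fin.lastCases (by simpa using hmem n) (by simpa using hτmem), Fin.snoc_last .., ?_⟩
      rw [Fin.sum_univ_castSucc]
      refine ENNReal.ofReal_add_le.trans (add_le_add (hle.trans_eq ?_) (le_of_eq ?_))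
      · simp [← Fin.castSucc_succ]
      · simp [Fin.succ_last, hlast, ENNReal.ofReal_max]

theorem ofReal_seqTruncVar_comp_le_truncVar (hδ : 0 ≤ δ) (hs : Monotone s)
    (hmem : ∀ i, s i ∈ Icc c d) (n : ℕ) :
    ENNReal.ofReal (seqTruncVar (f ∘ s) δ n) ≤ truncVar f δ c d := by
  obtain ⟨m, τ, hτ, hτmem, -, hle⟩ := exists_chain_seqTruncVar_le hδ hs hmem n
  exact hle.trans (le_iSup₂_of_le m τ (le_iSup₂_of_le hτ hτmem le_rfl))

end TruncVar

section Regulated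

variable {f : ℝ → ℝ} {a b x : ℝ}

theorem Regulated.exists_tendsto_nhdsGT (hf : Regulated f a b) (hx : x ∈ Ico a b) :
    ∃ L : ℝ, Tendsto f (nhdsWithin x (Ioi x)) (nhds L) := by
  rcases hx.1.eq_or_lt with rfl | hax
  exacts [hf.1, (hf.2.2 x ⟨hax, hx.2⟩).2]

theorem Regulated.exists_tendsto_nhdsLT (hf : Regulated f a b) (hx : x ∈ Ioc a b) :
    ∃ L : ℝ, Tendsto f (nhdsWithin x (Iio x)) (nhds L) := by
  rcases hx.2.eq_or_lt with rfl | hxb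
  exacts [hf.2.1, (hf.2.2 x ⟨hx.1, hxb⟩).1]

theorem Regulated.exists_mem_nhdsWithin_isBounded_image (hf : Regulated f a b)
    (hx : x ∈ Icc a b) : ∃ s ∈ nhdsWithin x (Icc a b), Bornology.IsBounded (f '' s) := by
  have hleft : ∃ s ∈ nhdsWithin x (Ico a x), Bornology.IsBounded (f '' s) := by
    rcases hx.1.eq_or_lt with rfl | hax
    · exact ⟨∅, by simp, by simp⟩
    · obtain ⟨L, hL⟩ := hf.exists_tendsto_nhdsLT ⟨hax, hx.2⟩
      exact Metric.exists_isBounded_image_of_tendsto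
        (hL.mono_left (nhdsWithin_mono x Ico_subset_Iio_self))
  have hright : ∃ s ∈ nhdsWithin x (Ioc x b), Bornology.IsBounded (f '' s) := by
    rcases hx.2.eq_or_lt with rfl | hxb
    · exact ⟨∅, by simp, by simp⟩
    · obtain ⟨L, hL⟩ := hf.exists_tendsto_nhdsGT ⟨hx.1, hxb⟩
      exact Metric.exists_isBounded_image_of_tendsto
        (hL.mono_left (nhdsWithin_mono x Ioc_subset_Ioi_self))
  obtain ⟨s, hs, hfs⟩ := hleft
  obtain ⟨s', hs', hfs'⟩ := hright
  refine ⟨s ∪ {x} ∪ s', ?_, ?_⟩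
  · rw [← Icc_union_Ioc_eq_Icc hx.1 hx.2, ← Ico_union_right hx.1, nhdsWithin_union,
      nhdsWithin_union, nhdsWithin_singleton]
    exact union_mem_sup (union_mem_sup hs (mem_pure.2 rfl)) hs'
  · simpa only [image_union, image_singleton] using
      (hfs.union Bornology.isBounded_singleton).union hfs'

theorem Regulated.isBounded_image_Icc (hf : Regulated f a b) :
    Bornology.IsBounded (f '' Icc a b) := by
  refine isCompact_Icc.induction_on (p := fun s ↦ Bornology.IsBounded (f '' s)) ?_ ?_ ?_
    fun x hx ↦ hf.exists_mem_nhdsWithin_isBounded_image hx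
  · simp
  · exact fun s t hst ht ↦ ht.subset (image_mono hst)
  · exact fun s t hs ht ↦ by simpa only [image_union] using hs.union ht

theorem Regulated.bddAbove_abs_sub (hf : Regulated f a b) {c d : ℝ} (hac : a ≤ c) (hdb : d ≤ b)
    (y : ℝ) : BddAbove {z | ∃ s ∈ Icc c d, z = |f s - y|} := by
  obtain ⟨M, hM⟩ := hf.isBounded_image_Icc.exists_norm_le
  refine ⟨M + |y|, ?_⟩
  rintro _ ⟨s, hs, rfl⟩
  have : |f s| ≤ M := hM _ (mem_image_of_mem f (Icc_subset_Icc hac hdb hs))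
  linarith [abs_sub (f s) y]

end Regulated

theorem ofReal_sum_mul_le {ι : Type*} {s : Finset ι} {a b : ι → ℝ} {V : ι → ENNReal}
    (ha : ∀ k ∈ s, 0 ≤ a k) (hb : ∀ k ∈ s, ENNReal.ofReal (b k) ≤ V k) :
    ENNReal.ofReal (∑ k ∈ s, a k * b k) ≤ ∑ k ∈ s, ENNReal.ofReal (a k) * V k := by
  refine (Finset.le_sum_of_subadditive _ ENNReal.ofReal_zero.le
    (fun _ _ ↦ ENNReal.ofReal_add_le) s _).trans (Finset.sum_le_sum fun k hk ↦ ?_)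
  rw [ENNReal.ofReal_mul (ha k hk)]
  exact mul_le_mul_right (hb k hk) _

theorem ofReal_abs_centredSum_comp_le {f g : ℝ → ℝ} {s s' : ℕ → ℝ} {c d : ℝ} (hs : Monotone s)
    (hs' : Monotone s') (hs_mem : ∀ i, s i ∈ Icc c d) (hs'_mem : ∀ i, s' i ∈ Icc c d)
    {r : ℕ} {δ ε : ℕ → ℝ} (hδ₀ : ∀ k ≤ r, 0 ≤ δ k) (hε₀ : ∀ k ≤ r, 0 ≤ ε k)
    (hδ : AntitoneOn δ (Iic r)) (hε : AntitoneOn ε (Iic r))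
    {C : ℝ} {n : ℕ} (hC : ∀ i ≤ n, |f (s i) - f (s 0)| ≤ C) :
    ENNReal.ofReal |centredSum (f ∘ s) (g ∘ s') n| ≤
      ∑ k ∈ Finset.range (r + 1),
          ENNReal.ofReal (2 ^ k * (if k = 0 then C else δ (k - 1))) * truncVar g (ε k) c d +
        ∑ k ∈ Finset.range (r + 1), ENNReal.ofReal (2 ^ k * ε k) * truncVar f (δ k) c d +
        ENNReal.ofReal (n * δ r * ε r) := by
  have hC₀ : 0 ≤ C := (abs_nonneg _).trans (hC 0 n.zero_le)
  have hf : ∀ k ∈ Finset.range (r + 1),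
      ENNReal.ofReal (seqTruncVar (f ∘ s) (δ k) n) ≤ truncVar f (δ k) c d := fun k hk ↦
    ofReal_seqTruncVar_comp_le_truncVar (hδ₀ k (Finset.mem_range_succ_iff.1 hk)) hs hs_mem n
  have hg : ∀ k ∈ Finset.range (r + 1),
      ENNReal.ofReal (seqTruncVar (g ∘ s') (ε k) n) ≤ truncVar g (ε k) c d := fun k hk ↦
    ofReal_seqTruncVar_comp_le_truncVar (hε₀ k (Finset.mem_range_succ_iff.1 hk)) hs' hs'_mem n
  have hcoeff_g : ∀ k ∈ Finset.range (r + 1), 0 ≤ 2 ^ k * (if k = 0 then C else δ (k - 1)) := by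
    intro k hk
    have hkr : k ≤ r := Finset.mem_range_succ_iff.1 hk
    refine mul_nonneg (by positivity) ?_
    split_ifs
    exacts [hC₀, hδ₀ _ (by lia)]
  have hcoeff_f : ∀ k ∈ Finset.range (r + 1), 0 ≤ 2 ^ k * ε k := fun k hk ↦
    mul_nonneg (by positivity) (hε₀ k (Finset.mem_range_succ_iff.1 hk))
  refine (ENNReal.ofReal_le_ofReal (abs_centredSum_le_sum_seqTruncVar hδ₀ hε₀ hδ hε hC)).trans ?_
  refine ENNReal.ofReal_add_le.trans (add_le_add_left (ENNReal.ofReal_add_le.trans ?_) _)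
  exact add_le_add (ofReal_sum_mul_le hcoeff_g hg) (ofReal_sum_mul_le hcoeff_f hf)

theorem antitoneOn_Iic_of_succ_le {α : Type*} [Preorder α] {φ : ℕ → α} {r : ℕ}
    (hφ : ∀ k < r, φ (k + 1) ≤ φ k) : AntitoneOn φ (Iic r) :=
  antitoneOn_of_succ_le ordConnected_Iic fun k _ _ hk ↦ hφ k hk

theorem monotone_of_interlacing {α : Type*} [Preorder α] {n : ℕ} {t ξ : Fin (n + 1) → α}
    (h₀ : ξ 0 ≤ t 0) (hξ : ∀ i : Fin n, t i.castSucc ≤ ξ i.succ ∧ ξ i.succ ≤ t i.succ) :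
    Monotone ξ :=
  Fin.monotone_iff_le_succ.2 fun i ↦
    (Fin.cases h₀ (fun j ↦ (hξ j).2) i.castSucc : ξ i.castSucc ≤ t i.castSucc).trans (hξ i).1

theorem sum_mul_sub_sub_eq_centredSum {R : Type*} [CommRing R] {n : ℕ} (x y : Fin (n + 1) → R) :
    ∑ i : Fin n, x i.succ * (y i.succ - y i.castSucc) - x 0 * (y (Fin.last n) - y 0) =
      centredSum (fun i ↦ x (Fin.clamp i n)) (fun i ↦ y (Fin.clamp i n)) n := by
  have hcast (i : Fin n) : Fin.clamp i n = i.castSucc := Fin.ext (min_eq_left i.2.le)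
  have hsucc (i : Fin n) : Fin.clamp (i + 1) n = i.succ := Fin.ext (min_eq_left i.2)
  have hzero : Fin.clamp 0 n = 0 := Fin.ext (min_eq_left n.zero_le)
  have htotal : y (Fin.last n) - y 0 = ∑ i : Fin n, (y i.succ - y i.castSucc) := by
    have h := Finset.sum_range_sub (fun i ↦ y (Fin.clamp i n)) n
    rw [Finset.sum_range, hzero, Fin.clamp_eq_last n n le_rfl] at h
    simpa only [hcast, hsucc] using h.symm
  rw [htotal, Finset.mul_sum, ← Finset.sum_sub_distrib, centredSum, Finset.sum_range]
  simp only [hcast, hsucc, hzero, sub_mul]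

theorem rs_sum_estimate_general {f g : ℝ → ℝ} {c d : ℝ} {n : ℕ} {t ξ : Fin (n + 1) → ℝ}
    (ht : Monotone t) (ht0 : t 0 = c) (htn : t (Fin.last n) = d) (hξ0 : ξ 0 = c)
    (hξ : ∀ i : Fin n, t i.castSucc ≤ ξ i.succ ∧ ξ i.succ ≤ t i.succ)
    {r : ℕ} {δ ε : ℕ → ℝ} (hδ₀ : ∀ k ≤ r, 0 ≤ δ k) (hε₀ : ∀ k ≤ r, 0 ≤ ε k)
    (hδ : AntitoneOn δ (Iic r)) (hε : AntitoneOn ε (Iic r))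
    {C : ℝ} (hC : ∀ s ∈ Icc c d, |f s - f c| ≤ C) :
    ENNReal.ofReal
        |∑ i : Fin n, f (ξ i.succ) * (g (t i.succ) - g (t i.castSucc)) - f c * (g d - g c)| ≤
      ∑ k ∈ Finset.range (r + 1),
          ENNReal.ofReal (2 ^ k * (if k = 0 then C else δ (k - 1))) * truncVar g (ε k) c d +
        ∑ k ∈ Finset.range (r + 1), ENNReal.ofReal (2 ^ k * ε k) * truncVar f (δ k) c d +
        ENNReal.ofReal (n * δ r * ε r) := by
  have hξ_mono : Monotone ξ := monotone_of_interlacing (hξ0.trans ht0.symm).le hξ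
  have ht_mem (i) : t i ∈ Icc c d :=
    ⟨ht0.symm.trans_le (ht i.zero_le), (ht i.le_last).trans_eq htn⟩
  have hξ_mem (i) : ξ i ∈ Icc c d :=
    ⟨hξ0.symm.trans_le (hξ_mono i.zero_le),
      (Fin.cases (hξ0.trans_le (ht_mem 0).1) (fun j ↦ (hξ j).2) i : ξ i ≤ t i).trans (ht_mem i).2⟩
  have hcentred : ∑ i : Fin n, f (ξ i.succ) * (g (t i.succ) - g (t i.castSucc)) -
      f c * (g d - g c) =
        centredSum (f ∘ fun i ↦ ξ (Fin.clamp i n)) (g ∘ fun i ↦ t (Fin.clamp i n)) n := by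
    have h := sum_mul_sub_sub_eq_centredSum (f ∘ ξ) (g ∘ t)
    simp only [Function.comp_apply, hξ0, ht0, htn] at h
    exact h
  rw [hcentred]
  refine ofReal_abs_centredSum_comp_le (hξ_mono.comp Fin.clamp_monotone)
    (ht.comp Fin.clamp_monotone) (fun _ ↦ hξ_mem _) (fun _ ↦ ht_mem _) hδ₀ hε₀ hδ hε fun i _ ↦ ?_
  simpa [Fin.clamp, hξ0] using hC _ (hξ_mem (Fin.clamp i n))

/-- Lemma 1: estimate for Riemann–Stieltjes sums over a partition of `[c;d] ⊆ [a;b]`. -/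
theorem rs_sum_estimate
    (a b c d : ℝ) (hac : a ≤ c) (hcd : c ≤ d) (hdb : d ≤ b)
    (f g : ℝ → ℝ) (hf : Regulated f a b) (hg : Regulated g a b)
    (n : ℕ) (t : Fin (n + 1) → ℝ) (ht : StrictMono t)
    (ht0 : t 0 = c) (htn : t (Fin.last n) = d)
    (ξ : Fin (n + 1) → ℝ) (hξ0 : ξ 0 = c)
    (hξ : ∀ i : Fin n, t i.castSucc ≤ ξ i.succ ∧ ξ i.succ ≤ t i.succ)
    (r : ℕ) (δ ε : ℕ → ℝ)
    (hδnn : ∀ k ≤ r, 0 ≤ δ k) (hεnn : ∀ k ≤ r, 0 ≤ ε k)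
    (hδa : ∀ k < r, δ (k + 1) ≤ δ k) (hεa : ∀ k < r, ε (k + 1) ≤ ε k)
    (δm1 : ℝ) (hδm1 : δm1 = sSup {x | ∃ s ∈ Set.Icc c d, x = |f s - f c|}) :
    ENNReal.ofReal
        |∑ i : Fin n, f (ξ i.succ) * (g (t i.succ) - g (t i.castSucc)) -
          f c * (g d - g c)|
      ≤ (∑ k ∈ Finset.range (r + 1),
            ENNReal.ofReal ((2 : ℝ) ^ k * (if k = 0 then δm1 else δ (k - 1))) *
              truncVar g (ε k) c d)
        + (∑ k ∈ Finset.range (r + 1),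
            ENNReal.ofReal ((2 : ℝ) ^ k * ε k) * truncVar f (δ k) c d)
        + ENNReal.ofReal ((n : ℝ) * δ r * ε r) := by
  exact rs_sum_estimate_general ht.monotone ht0 htn hξ0 hξ hδnn hεnn
    (antitoneOn_Iic_of_succ_le hδa) (antitoneOn_Iic_of_succ_le hεa)
    fun s hs ↦ hδm1 ▸ le_csSup (hf.bddAbove_abs_sub hac hdb (f c)) ⟨s, hs, rfl⟩
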